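/- Let 𝔤 be a finite-dimensional semisimple Lie algebra over an algebraically closed field of characteristic 0 and let (h,e,f) and (h/2, e', f') both be sl₂-triples in 𝔤. Then for every integer j ≥ 1, the number dim(𝔤^e ∩ 𝔤(4j−2)) + dim(𝔤^e ∩ 𝔤(4j)) is even. -/

import Mathlib

open LieAlgebra Module

open LieModule

theorem Module.End.maxGenEigenspace_smul_mul {K V : Type*} [Field K] [AddCommGroup V] [Module K V]
    (φ : End K V) (μ : K) {c : K} (hc : c ≠ 0) :
    (c • φ).maxGenEigenspace (c * μ) = φ.maxGenEigenspace μ := by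
  ext x
  simp only [mem_maxGenEigenspace]
  refine exists_congr fun n ↦ ?_
  rw [mul_smul, ← smul_sub, smul_pow, LinearMap.smul_apply,
    smul_eq_zero_iff_right (pow_ne_zero n hc)]

theorem Module.End.exists_mem_eigenspace_of_mem_maxGenEigenspace {K V : Type*} [Field K]
    [AddCommGroup V] [Module K V] {φ : End K V} {μ : K} {p : Submodule K V}
    (hp : ∀ x ∈ p, φ x ∈ p) {x : V} (hx : x ∈ φ.maxGenEigenspace μ) (hxp : x ∈ p) (hx0 : x ≠ 0) :
    ∃ y ∈ p, y ≠ 0 ∧ φ y = μ • y := by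
  obtain ⟨n, hn, hn'⟩ := Nat.exists_not_and_succ_of_not_zero_of_exists
    (p := fun n ↦ ((φ - μ • 1) ^ n) x = 0) (by simpa using hx0) ((mem_maxGenEigenspace ..).1 hx)
  refine ⟨((φ - μ • 1) ^ n) x, ?_, hn, ?_⟩
  · clear hn hn'
    induction n with
    | zero => simpa using hxp
    | succ n ih =>
      rw [pow_succ', End.mul_apply]
      exact p.sub_mem (hp _ ih) (p.smul_mem _ ih)
  · rw [pow_succ', End.mul_apply] at hn'
    simpa [sub_eq_zero] using hn'

/-- A space with a nondegenerate skew-symmetric form has even dimension. -/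
theorem LinearMap.BilinForm.even_finrank_of_skew {K V : Type*} [Field K] [CharZero K]
    [AddCommGroup V] [Module K V] [FiniteDimensional K V] {B : LinearMap.BilinForm K V}
    (hB : B.Nondegenerate) (hskew : ∀ x y, B x y = -B y x) : Even (finrank K V) := by
  let b := finBasis K V
  have hdet : (BilinForm.toMatrix b B).det ≠ 0 := by
    rwa [← Matrix.nondegenerate_iff_det_ne_zero, BilinForm.nondegenerate_toMatrix_iff]
  have htr : (BilinForm.toMatrix b B).transpose = -BilinForm.toMatrix b B := by
    ext i j
    simp [BilinForm.toMatrix_apply, hskew (b j) (b i)]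
  by_contra hodd
  have h := congrArg Matrix.det htr
  rw [Matrix.det_transpose, Matrix.det_neg, Fintype.card_fin,
    (Nat.not_even_iff_odd.1 hodd).neg_one_pow, neg_one_mul] at h
  exact hdet (self_eq_neg.1 h)

namespace IsSl2Triple

variable {K L M : Type*} [Field K] [LieRing L] [LieAlgebra K L]
  [AddCommGroup M] [Module K M] [LieRingModule L M] [LieModule K L M] {h e f : L}

theorem lie_e_mem_maxGenEigenspace (t : IsSl2Triple h e f) {μ : K} {x : M}
    (hx : x ∈ (toEnd K L M h).maxGenEigenspace μ) :
    ⁅e, x⁆ ∈ (toEnd K L M h).maxGenEigenspace (μ + 2) := by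
  rw [add_comm]
  refine lie_mem_maxGenEigenspace_toEnd ((End.mem_maxGenEigenspace ..).2 ⟨1, ?_⟩) hx
  simp [t.lie_h_e_smul K]

theorem pow_toEnd_e_mem_maxGenEigenspace (t : IsSl2Triple h e f) {μ : K} {x : M}
    (hx : x ∈ (toEnd K L M h).maxGenEigenspace μ) (n : ℕ) :
    (toEnd K L M e ^ n) x ∈ (toEnd K L M h).maxGenEigenspace (μ + 2 * n) := by
  induction n with
  | zero => simpa using hx
  | succ n ih =>
    rw [pow_succ', End.mul_apply, Nat.cast_succ, mul_add_one, ← add_assoc]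
    exact t.lie_e_mem_maxGenEigenspace ih

theorem maxGenEigenspace_neg (μ : K) :
    (toEnd K L M (-h)).maxGenEigenspace (-μ) = (toEnd K L M h).maxGenEigenspace μ := by
  simpa using End.maxGenEigenspace_smul_mul (toEnd K L M h) μ (neg_ne_zero.2 one_ne_zero)

theorem pow_toEnd_f_mem_maxGenEigenspace (t : IsSl2Triple h e f) {μ : K} {x : M}
    (hx : x ∈ (toEnd K L M h).maxGenEigenspace μ) (n : ℕ) :
    (toEnd K L M f ^ n) x ∈ (toEnd K L M h).maxGenEigenspace (μ - 2 * n) := by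
  rw [← maxGenEigenspace_neg] at hx ⊢
  convert t.symm.pow_toEnd_e_mem_maxGenEigenspace hx n using 2
  ring

theorem exists_pow_toEnd_e_eq_zero [CharZero K] [FiniteDimensional K M]
    (t : IsSl2Triple h e f) {μ : K} {x : M} (hx : x ∈ (toEnd K L M h).maxGenEigenspace μ) :
    ∃ n, (toEnd K L M e ^ n) x = 0 := by
  by_contra! hne
  refine Set.infinite_range_of_injective (f := fun n : ℕ ↦ μ + 2 * n)
    (fun a b hab ↦ by simpa using hab) ((End.finite_hasEigenvalue (toEnd K L M h)).subset ?_)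
  rintro _ ⟨n, rfl⟩
  obtain ⟨y, -, hy0, hy⟩ := End.exists_mem_eigenspace_of_mem_maxGenEigenspace (p := ⊤)
    (fun _ _ ↦ trivial) (t.pow_toEnd_e_mem_maxGenEigenspace hx n) trivial (hne n)
  exact End.hasEigenvalue_of_hasEigenvector ⟨End.mem_eigenspace_iff.2 hy, hy0⟩

theorem exists_pow_toEnd_f_eq_zero [CharZero K] [FiniteDimensional K M]
    (t : IsSl2Triple h e f) {μ : K} {x : M} (hx : x ∈ (toEnd K L M h).maxGenEigenspace μ) :
    ∃ n, (toEnd K L M f ^ n) x = 0 :=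
  t.symm.exists_pow_toEnd_e_eq_zero (by rwa [← maxGenEigenspace_neg] at hx)

theorem lie_h_pow_toEnd_f (K : Type*) [Field K] [LieAlgebra K L] [Module K M] [LieModule K L M]
    (t : IsSl2Triple h e f) (x : M) (n : ℕ) :
    ⁅h, (toEnd K L M f ^ n) x⁆ = (toEnd K L M f ^ n) (⁅h, x⁆ - (2 * n : K) • x) := by
  induction n with
  | zero => simp
  | succ n ih =>
    rw [pow_succ', End.mul_apply, toEnd_apply_apply, leibniz_lie, ih, t.lie_lie_smul_f K]
    simp only [End.mul_apply, toEnd_apply_apply, map_sub, map_smul, lie_sub, lie_smul, neg_lie,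
      smul_lie, Nat.cast_succ]
    module

theorem lie_e_pow_succ_toEnd_f (K : Type*) [Field K] [LieAlgebra K L] [Module K M] [LieModule K L M]
    (t : IsSl2Triple h e f) (x : M) (n : ℕ) :
    ⁅e, (toEnd K L M f ^ (n + 1)) x⁆ = (toEnd K L M f ^ (n + 1)) ⁅e, x⁆ +
      (n + 1 : K) • (toEnd K L M f ^ n) (⁅h, x⁆ - (n : K) • x) := by
  induction n with
  | zero => simp [leibniz_lie e f, t.lie_e_f, add_comm]
  | succ n ih =>
    rw [pow_succ', End.mul_apply, toEnd_apply_apply, leibniz_lie, ih, t.lie_e_f,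
      t.lie_h_pow_toEnd_f K]
    simp only [pow_succ' _ n, End.mul_apply, toEnd_apply_apply, map_sub, map_smul, lie_sub,
      lie_smul, Nat.cast_succ, lie_add]
    module

/-- `e` is injective on generalized weight spaces of negative weight. -/
theorem eq_zero_of_lie_e_eq_zero [CharZero K] [FiniteDimensional K M]
    (t : IsSl2Triple h e f) {m : ℤ} (hm : m < 0) {x : M}
    (hx : x ∈ (toEnd K L M h).maxGenEigenspace (m : K)) (hex : ⁅e, x⁆ = 0) :
    x = 0 := by
  by_contra hx0
  have hker : ∀ z ∈ LinearMap.ker (toEnd K L M e), toEnd K L M h z ∈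
      LinearMap.ker (toEnd K L M e) := by
    intro z hz
    rw [LinearMap.mem_ker, toEnd_apply_apply] at hz ⊢
    rw [toEnd_apply_apply, leibniz_lie, hz, ← lie_skew, t.lie_h_e_smul K]
    simp [hz]
  obtain ⟨y, hy, hy0, hhy⟩ :=
    End.exists_mem_eigenspace_of_mem_maxGenEigenspace hker hx (by simpa using hex) hx0
  obtain ⟨n, hn⟩ := HasPrimitiveVectorWith.exists_nat (t := t) ⟨hy0, hhy, by simpa using hy⟩
  have : m = n := by exact_mod_cast hn
  lia

theorem eq_zero_of_pow_toEnd_f_eq_zero_of_lie_h [CharZero K] [FiniteDimensional K M]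
    (t : IsSl2Triple h e f) {m : ℕ} {x : M} (hx : ⁅h, x⁆ = (m : K) • x)
    (hfx : (toEnd K L M f ^ m) x = 0) : x = 0 := by
  by_contra hx0
  obtain ⟨n, hn, hn'⟩ := Nat.exists_not_and_succ_of_not_zero_of_exists
    (p := fun n ↦ (toEnd K L M e ^ n) x = 0) (by simpa using hx0)
    (t.exists_pow_toEnd_e_eq_zero (μ := (m : K))
      ((End.mem_maxGenEigenspace ..).2 ⟨1, by simp [hx]⟩))
  have hh := t.lie_h_pow_toEnd_e hx
  have hf (i : ℕ) : (toEnd K L M f ^ (m + 2 * i)) ((toEnd K L M e ^ i) x) = 0 := by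
    induction i with
    | zero => simpa using hfx
    | succ i ih =>
      have key := t.lie_e_pow_succ_toEnd_f K ((toEnd K L M e ^ i) x) (m + 2 * i + 1)
      have h1 : (toEnd K L M f ^ (m + 2 * i + 1)) ((toEnd K L M e ^ i) x) = 0 := by
        rw [pow_succ', End.mul_apply, ih, map_zero]
      rw [pow_succ' _ (m + 2 * i + 1), End.mul_apply, h1, hh, ← sub_smul, map_smul, h1] at key
      simpa [pow_succ', mul_add, ← add_assoc] using key.symm
  have P : t.HasPrimitiveVectorWith ((toEnd K L M e ^ n) x) (m + 2 * n : K) :=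
    ⟨hn, hh n, by rwa [lie_e_pow_toEnd_e]⟩
  exact P.pow_toEnd_f_ne_zero_of_eq_nat (n := m + 2 * n) (by push_cast; rfl) le_rfl (hf n)

/-- `f ^ m` is injective on the generalized weight space of weight `m`. -/
theorem eq_zero_of_pow_toEnd_f_eq_zero [CharZero K] [FiniteDimensional K M] (t : IsSl2Triple h e f)
    {m : ℕ} {x : M} (hx : x ∈ (toEnd K L M h).maxGenEigenspace (m : K))
    (hfx : (toEnd K L M f ^ m) x = 0) : x = 0 := by
  by_contra hx0
  have hker : ∀ z ∈ LinearMap.ker (toEnd K L M f ^ m), toEnd K L M h z ∈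
      LinearMap.ker (toEnd K L M f ^ m) := by
    intro z hz
    have key := t.lie_h_pow_toEnd_f K z m
    rw [LinearMap.mem_ker] at hz ⊢
    simpa [hz] using key.symm
  obtain ⟨y, hy, hy0, hhy⟩ :=
    End.exists_mem_eigenspace_of_mem_maxGenEigenspace hker hx hfx hx0
  exact hy0 (t.eq_zero_of_pow_toEnd_f_eq_zero_of_lie_h hhy hy)

theorem eq_zero_of_lie_h_eq_smul_add [CharZero K] [FiniteDimensional K M] (t : IsSl2Triple h e f)
    {m : ℕ} {x y : M} (hx : x ∈ (toEnd K L M h).maxGenEigenspace (m : K)) (hex : ⁅e, x⁆ = 0)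
    (hxy : ⁅h, x⁆ = (m : K) • x + y) (hy : ⁅h, y⁆ = (m : K) • y) (hey : ⁅e, y⁆ = 0) : y = 0 := by
  by_contra hy0
  have P : t.HasPrimitiveVectorWith y (m : K) := ⟨hy0, hy, hey⟩
  have hfy (d : ℕ) : (toEnd K L M f ^ (m + 1 + d)) y = 0 := by
    rw [add_comm, pow_add, End.mul_apply, P.pow_toEnd_f_eq_zero_of_eq_nat rfl, map_zero]
  have descend (d : ℕ) (hd : (toEnd K L M f ^ (m + 1 + d)) x = 0) :
      (toEnd K L M f ^ (m + 1)) x = 0 := by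
    induction d with
    | zero => exact hd
    | succ d ih =>
      apply ih
      have key := t.lie_e_pow_succ_toEnd_f K x (m + 1 + d)
      rw [add_assoc _ d, hd, hex, hxy, add_sub_right_comm, ← sub_smul, map_add, hfy] at key
      have h1 : ((m + 1 + d : ℕ) + 1 : K) ≠ 0 := Nat.cast_add_one_ne_zero _
      have h2 : (m : K) - (m + 1 + d : ℕ) ≠ 0 := by
        rw [sub_ne_zero, Nat.cast_injective.ne_iff]
        lia
      rw [lie_zero, map_zero, zero_add, add_zero, map_smul] at key
      simpa only [smul_eq_zero, h1, h2, false_or] using key.symm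
  obtain ⟨N, hN⟩ := t.exists_pow_toEnd_f_eq_zero hx
  have key := t.lie_e_pow_succ_toEnd_f K x m
  rw [descend N (by rw [pow_add, End.mul_apply, hN, map_zero]), hex, hxy, add_sub_cancel_left]
    at key
  have h1 : (m + 1 : K) ≠ 0 := Nat.cast_add_one_ne_zero _
  exact P.pow_toEnd_f_ne_zero_of_eq_nat rfl le_rfl (by simpa [h1] using key.symm)

/-- `h` acts semisimply on the kernel of `e`. -/
theorem ker_inf_maxGenEigenspace [CharZero K] [FiniteDimensional K M]
    (t : IsSl2Triple h e f) (m : ℕ) :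
    LinearMap.ker (toEnd K L M e) ⊓ (toEnd K L M h).maxGenEigenspace (m : K) =
      LinearMap.ker (toEnd K L M e) ⊓ (toEnd K L M h).eigenspace (m : K) := by
  refine le_antisymm (fun x ⟨hex, hx⟩ ↦ ⟨hex, ?_⟩)
    (inf_le_inf_left _ ((End.genEigenspace _ _).mono le_top))
  set N := toEnd K L M h - (m : K) • (1 : End K M) with hN
  have he (n : ℕ) : ⁅e, (N ^ n) x⁆ = 0 := by
    induction n with
    | zero => simpa using hex
    | succ n ih =>
      rw [pow_succ', End.mul_apply]
      generalize (N ^ n) x = y at ih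
      simp [hN, leibniz_lie e h, ih, ← lie_skew e h, t.lie_h_e_smul K]
  by_contra hne
  have hx' : ∃ n, (N ^ (n + 1)) x = 0 := by
    obtain ⟨n, hn⟩ := (End.mem_maxGenEigenspace ..).1 hx
    exact ⟨n, by rw [pow_succ', End.mul_apply, hn, map_zero]⟩
  obtain ⟨n, hn, hn'⟩ := Nat.exists_not_and_succ_of_not_zero_of_exists
    (p := fun n ↦ (N ^ (n + 1)) x = 0)
    (fun h0 ↦ hne (by simpa [hN, sub_eq_zero] using h0)) hx'
  refine hn (t.eq_zero_of_lie_h_eq_smul_add (K := K) (x := (N ^ n) x) (m := m) ?_ (he n)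
    ?_ ?_ (he _))
  · refine (End.mem_maxGenEigenspace ..).2 ⟨2, ?_⟩
    rw [← hN, ← End.mul_apply, ← pow_add, add_comm]
    exact hn'
  · rw [pow_succ', End.mul_apply]
    simp [hN]
  · rw [pow_succ', End.mul_apply] at hn'
    simpa [hN, sub_eq_zero] using hn'

end IsSl2Triple

section Killing

variable {K L : Type*} [Field K] [LieRing L] [LieAlgebra K L]

theorem killingForm_pow_toEnd_sub_smul (u : L) (μ : K) (n : ℕ) (x y : L) :
    killingForm K L (((toEnd K L L u - μ • 1) ^ n) x) y =
      (-1) ^ n * killingForm K L x (((toEnd K L L u - (-μ) • 1) ^ n) y) := by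
  induction n generalizing y with
  | zero => simp
  | succ n ih =>
    have hstep (z : L) : killingForm K L ((toEnd K L L u - μ • 1) z) y =
        -killingForm K L z ((toEnd K L L u - (-μ) • 1) y) := by
      simp [traceForm_apply_lie_apply']
      ring
    rw [pow_succ', End.mul_apply, hstep, ih, ← End.mul_apply, ← pow_succ]
    ring

theorem killingForm_pow_toEnd (u : L) (n : ℕ) (x y : L) :
    killingForm K L ((toEnd K L L u ^ n) x) y =
      (-1) ^ n * killingForm K L x ((toEnd K L L u ^ n) y) := by
  simpa using killingForm_pow_toEnd_sub_smul u (0 : K) n x y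

variable [FiniteDimensional K L] [IsKilling K L]

/-- The Killing form pairs the generalized eigenspaces of `ad u` for `μ` and `-μ`
nondegenerately. -/
theorem eq_zero_of_killingForm_maxGenEigenspace_neg (u : L) {μ : K} {x : L}
    (hx : x ∈ (toEnd K L L u).maxGenEigenspace μ)
    (hxy : ∀ y ∈ (toEnd K L L u).maxGenEigenspace (-μ), killingForm K L x y = 0) : x = 0 := by
  refine (IsKilling.killingForm_nondegenerate K L).1 x fun z ↦ ?_
  obtain ⟨n, hn⟩ := (End.mem_maxGenEigenspace ..).1 hx
  obtain ⟨N, hnN, hN⟩ := ((Filter.eventually_ge_atTop n).and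
    (toEnd K L L u - (-μ) • 1).eventually_isCompl_ker_pow_range_pow).exists
  obtain ⟨y, hy, w, ⟨v, rfl⟩, rfl⟩ :=
    Submodule.mem_sup.1 (hN.sup_eq_top.ge (Submodule.mem_top (x := z)))
  have hxN : ((toEnd K L L u - μ • 1) ^ N) x = 0 := by
    rw [← Nat.sub_add_cancel hnN, pow_add, End.mul_apply, hn, map_zero]
  have key := killingForm_pow_toEnd_sub_smul u μ N x v
  rw [hxN, map_zero, LinearMap.zero_apply, eq_comm, mul_eq_zero,
    or_iff_right (pow_ne_zero N (neg_ne_zero.2 one_ne_zero))] at key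
  rw [map_add, key, add_zero]
  exact hxy y ((End.mem_maxGenEigenspace ..).2 ⟨N, hy⟩)

end Killing

namespace IsSl2Triple

variable {K L : Type*} [Field K] [CharZero K] [LieRing L] [LieAlgebra K L] [FiniteDimensional K L]
  [IsKilling K L] {h e f : L}

/-- `e` maps the generalized weight space of weight `m ≥ -1` onto that of weight `m + 2`. -/
theorem exists_lie_e_eq (t : IsSl2Triple h e f) {m : ℤ} (hm : -2 < m) {z : L}
    (hz : z ∈ (toEnd K L L h).maxGenEigenspace (m + 2 : K)) :
    ∃ x ∈ (toEnd K L L h).maxGenEigenspace (m : K), ⁅e, x⁆ = z := by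
  let W := (toEnd K L L h).maxGenEigenspace
  let p : W (m : K) →ₗ[K] Dual K (W (-(m + 2) : K)) :=
    (killingForm K L).compl₁₂ (toEnd K L L e ∘ₗ (W (m : K)).subtype) (W (-(m + 2) : K)).subtype
  have hp : Function.Surjective p := by
    rw [← LinearMap.flip_injective_iff₁, injective_iff_map_eq_zero]
    intro y hy
    have hey : ⁅e, (y : L)⁆ = 0 := by
      refine eq_zero_of_killingForm_maxGenEigenspace_neg (μ := (-m : K)) h ?_ fun x hx ↦ ?_
      · convert t.lie_e_mem_maxGenEigenspace y.2 using 2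
        ring
      · have := LinearMap.congr_fun hy ⟨x, by rwa [neg_neg] at hx⟩
        simpa [p, traceForm_apply_lie_apply', traceForm_comm K L L x] using this
    refine Subtype.ext (t.eq_zero_of_lie_e_eq_zero (K := K) (m := -(m + 2)) (by lia) ?_ hey)
    rw [Int.cast_neg, Int.cast_add, Int.cast_ofNat]
    exact y.2
  obtain ⟨x, hx⟩ := hp ((killingForm K L z) ∘ₗ (W (-(m + 2) : K)).subtype)
  refine ⟨x, x.2, sub_eq_zero.1 (eq_zero_of_killingForm_maxGenEigenspace_neg h
    (sub_mem (t.lie_e_mem_maxGenEigenspace x.2) hz) fun y hy ↦ ?_)⟩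
  have := LinearMap.congr_fun hx ⟨y, hy⟩
  simpa [p, sub_eq_zero] using this

theorem finrank_ker_inf_eigenspace_add (t : IsSl2Triple h e f) (m : ℕ) :
    finrank K ↥(LinearMap.ker (toEnd K L L e) ⊓ (toEnd K L L h).eigenspace (m : K)) +
      finrank K ((toEnd K L L h).maxGenEigenspace (m + 2 : K)) =
    finrank K ((toEnd K L L h).maxGenEigenspace (m : K)) := by
  let φ : (toEnd K L L h).maxGenEigenspace (m : K) →ₗ[K]
      (toEnd K L L h).maxGenEigenspace (m + 2 : K) :=
    (toEnd K L L e).restrict fun x hx ↦ t.lie_e_mem_maxGenEigenspace hx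
  have hφ : LinearMap.range φ = ⊤ := by
    rw [LinearMap.range_eq_top]
    rintro ⟨z, hz⟩
    obtain ⟨x, hx, hxz⟩ := t.exists_lie_e_eq (m := m) (by lia) (by simpa using hz)
    exact ⟨⟨x, by simpa using hx⟩, Subtype.ext hxz⟩
  have hker : (LinearMap.ker φ).map (Submodule.subtype _) =
      LinearMap.ker (toEnd K L L e) ⊓ (toEnd K L L h).eigenspace (m : K) := by
    rw [← t.ker_inf_maxGenEigenspace]
    ext x
    constructor
    · rintro ⟨y, hy, rfl⟩
      exact ⟨congrArg Subtype.val hy, y.2⟩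
    · rintro ⟨hex, hx⟩
      exact ⟨⟨x, hx⟩, Subtype.ext hex, rfl⟩
  rw [← hker, Submodule.finrank_map_subtype_eq, ← φ.finrank_range_add_finrank_ker, hφ,
    finrank_top, add_comm]

/-- Generalized weight spaces of odd weight carry the symplectic form `κ(x, f ^ m y)`. -/
theorem even_finrank_maxGenEigenspace (t : IsSl2Triple h e f) {m : ℕ} (hm : Odd m) :
    Even (finrank K ((toEnd K L L h).maxGenEigenspace (m : K))) := by
  let B : LinearMap.BilinForm K ((toEnd K L L h).maxGenEigenspace (m : K)) :=
    (killingForm K L).compl₁₂ (Submodule.subtype _) ((toEnd K L L f ^ m) ∘ₗ Submodule.subtype _)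
  have hB (x y) : B x y = killingForm K L x ((toEnd K L L f ^ m) y) := rfl
  have hskew (x y) : B x y = -B y x := by
    rw [hB, hB, traceForm_comm, killingForm_pow_toEnd, hm.neg_one_pow, neg_one_mul]
  have hright : B.SeparatingRight := by
    intro y hy
    refine Subtype.ext (t.eq_zero_of_pow_toEnd_f_eq_zero y.2 ?_)
    refine eq_zero_of_killingForm_maxGenEigenspace_neg (μ := (-m : K)) h ?_ fun x hx ↦ ?_
    · convert t.pow_toEnd_f_mem_maxGenEigenspace y.2 m using 2
      ring
    · rw [traceForm_comm]
      exact hy ⟨x, by simpa using hx⟩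
  exact LinearMap.BilinForm.even_finrank_of_skew
    ⟨fun x hx ↦ hright x fun y ↦ by rw [hskew, hx, neg_zero], hright⟩ hskew

end IsSl2Triple

/-- If `(h,e,f)` and `(h/2,e',f')` are both sl₂-triples in a finite-dimensional semisimple
Lie algebra over an algebraically closed char-0 field, then for every `j ≥ 1` the number
`dim(𝔤^e ∩ 𝔤(4j−2)) + dim(𝔤^e ∩ 𝔤(4j))` is even. -/
theorem stmt_4 {k : Type*} [Field k] [IsAlgClosed k] [CharZero k]
    {L : Type*} [LieRing L] [LieAlgebra k L] [FiniteDimensional k L]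
    [LieAlgebra.IsSemisimple k L]
    {h e f e' f' : L} (ht : IsSl2Triple h e f)
    (ht' : IsSl2Triple ((2⁻¹ : k) • h) e' f') :
    ∀ j : ℤ, 1 ≤ j →
      Even (Module.finrank k ((LinearMap.ker (ad k L e) ⊓
          (ad k L h).eigenspace (((4 * j - 2 : ℤ) : k)) : Submodule k L)) +
        Module.finrank k ((LinearMap.ker (ad k L e) ⊓
          (ad k L h).eigenspace (((4 * j : ℤ) : k)) : Submodule k L))) := by
  intro j hj
  obtain ⟨i, rfl⟩ : ∃ i : ℕ, j = i + 1 := ⟨(j - 1).toNat, by lia⟩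
  have even_finrank {m : ℕ} (hm : Odd m) :
      Even (finrank k ((toEnd k L L h).maxGenEigenspace ((2 * m : ℕ) : k))) := by
    have := End.maxGenEigenspace_smul_mul (toEnd k L L h) ((2 * m : ℕ) : k)
      (c := 2⁻¹) (by simp)
    rw [← this, ← map_smul, Nat.cast_mul, Nat.cast_two, inv_mul_cancel_left₀ two_ne_zero]
    exact ht'.even_finrank_maxGenEigenspace (K := k) hm
  have h₁ := ht.finrank_ker_inf_eigenspace_add (K := k) (4 * i + 2)
  have h₂ := ht.finrank_ker_inf_eigenspace_add (K := k) (4 * i + 4)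
  have he₁ := even_finrank (m := 2 * i + 1) (by simp)
  have he₂ := even_finrank (m := 2 * i + 3) ⟨i + 1, by ring⟩
  rw [show ((4 * i + 2 : ℕ) + 2 : k) = ((4 * i + 4 : ℕ) : k) by push_cast; ring] at h₁
  rw [show ((4 * i + 4 : ℕ) + 2 : k) = ((2 * (2 * i + 3) : ℕ) : k) by push_cast; ring] at h₂
  rw [show 2 * (2 * i + 1) = 4 * i + 2 by ring] at he₁
  rw [show 4 * ((i : ℤ) + 1) - 2 = (4 * i + 2 : ℕ) by push_cast; ring,
    show 4 * ((i : ℤ) + 1) = (4 * i + 4 : ℕ) by push_cast; ring, Int.cast_natCast, Int.cast_natCast]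
  have parity {a b c d w : ℕ} (hac : a + w = c) (hbd : b + d = w) (hc : Even c) (hd : Even d) :
      Even (a + b) := by grind
  exact parity h₁ h₂ he₁ he₂
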